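/- For all i, j, h ∈ {0,1,…,d}: (a) if i < j, then E_i* A_h E_j* ≠ 0 if and only if h = j; (b) if h > i, then E_i* A_i E_h* = 0; (c) if h < j, then E_i* A_h E_j* ≠ 0 if and only if i = j. -/

import Mathlib

open Finset Matrix

/-- Vertex set of the wreath product `K_{n 0} ≀ K_{n 1} ≀ ⋯ ≀ K_{n (d-1)}`
(paper indices `n_1, …, n_d` correspond to `n 0, …, n (d-1)`). -/
abbrev Vx (d : ℕ) (n : ℕ → ℕ) : Type := (i : Fin d) → Fin (n i)

/-- `delta x y = 0` if `x = y`; otherwise `delta x y` is the largest (1-based)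
index at which `x` and `y` differ. -/
def delta {d : ℕ} {n : ℕ → ℕ} (x y : Vx d n) : ℕ :=
  (Finset.univ.filter fun i => x i ≠ y i).sup fun i => (i : ℕ) + 1

/-- The `i`-th adjacency matrix of the wreath product: `(A i) x y = 1` iff `delta x y = i`. -/
noncomputable def A (d : ℕ) (n : ℕ → ℕ) (i : ℕ) : Matrix (Vx d n) (Vx d n) ℂ :=
  Matrix.of fun x y => if delta x y = i then 1 else 0

/-- The valencies: `k 0 = 1` and, for `1 ≤ i`, `k i = n_1 ⋯ n_{i-1} (n_i - 1)`,
i.e. `k i = n 0 ⋯ n (i-2) * (n (i-1) - 1)`. -/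
def k (n : ℕ → ℕ) (i : ℕ) : ℕ :=
  if i = 0 then 1 else (∏ j ∈ Finset.range (i - 1), n j) * (n (i - 1) - 1)

/-- The dual idempotent `E_i*` with respect to the base point `x₀`: the diagonal
0-1 matrix with `(E_i*)_{yy} = 1` iff `delta x₀ y = i`. -/
noncomputable def Es {d : ℕ} {n : ℕ → ℕ} (x₀ : Vx d n) (i : ℕ) :
    Matrix (Vx d n) (Vx d n) ℂ :=
  Matrix.of fun y z => if y = z ∧ delta x₀ y = i then 1 else 0

/-- The all-ones matrix `J`. -/
noncomputable def Jm (d : ℕ) (n : ℕ → ℕ) : Matrix (Vx d n) (Vx d n) ℂ :=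
  Matrix.of fun _ _ => 1

/-- The matrices `G i j`. -/
noncomputable def G {d : ℕ} {n : ℕ → ℕ} (x₀ : Vx d n) (i j : ℕ) :
    Matrix (Vx d n) (Vx d n) ℂ :=
  if i < j then ((k n j : ℂ))⁻¹ • (Es x₀ i * A d n j * Es x₀ j)
  else if j < i then ((k n j : ℂ))⁻¹ • (Es x₀ i * A d n i * Es x₀ j)
  else ((k n i : ℂ))⁻¹ • (Es x₀ i * Jm d n * Es x₀ i)

/-- The span `U` of the matrices `G i j`, `i, j ∈ [d]`. -/
noncomputable def Uspan {d : ℕ} {n : ℕ → ℕ} (x₀ : Vx d n) :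
    Submodule ℂ (Matrix (Vx d n) (Vx d n) ℂ) :=
  Submodule.span ℂ (Set.range fun p : Fin (d + 1) × Fin (d + 1) => G x₀ p.1 p.2)

/-- The Terwilliger algebra of the wreath product with respect to `x₀`. -/
noncomputable def Ter {d : ℕ} {n : ℕ → ℕ} (x₀ : Vx d n) :
    Subalgebra ℂ (Matrix (Vx d n) (Vx d n) ℂ) :=
  Algebra.adjoin ℂ
    ((Set.range fun i : Fin (d + 1) => A d n i) ∪ (Set.range fun i : Fin (d + 1) => Es x₀ i))

/-- The matrices `F i h`, for `1 ≤ i ≤ d` and `0 ≤ h ≤ i - 1`. -/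
noncomputable def F {d : ℕ} {n : ℕ → ℕ} (x₀ : Vx d n) (i h : ℕ) :
    Matrix (Vx d n) (Vx d n) ℂ :=
  if h < i - 1 then
    (∑ j ∈ Finset.range (h + 1), (k n j : ℂ))⁻¹ •
        (∑ j ∈ Finset.range (h + 1), Es x₀ i * A d n j * Es x₀ i)
      - (∑ j ∈ Finset.range (h + 2), (k n j : ℂ))⁻¹ •
          (∑ j ∈ Finset.range (h + 2), Es x₀ i * A d n j * Es x₀ i)
  else
    (∑ j ∈ Finset.range i, (k n j : ℂ))⁻¹ •
        (∑ j ∈ Finset.range i, Es x₀ i * A d n j * Es x₀ i)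
      - G x₀ i i

theorem delta_le_iff' {d : ℕ} {n : ℕ → ℕ} (x y : Vx d n) (m : ℕ) :
    delta x y ≤ m ↔ ∀ i : Fin d, m ≤ (i : ℕ) → x i = y i := by
  unfold delta
  rw [Finset.sup_le_iff]
  constructor
  · intro H i hi
    by_contra hne
    have := H i (by simp [hne])
    omega
  · intro H i hi
    by_contra hlt
    have h1 : x i ≠ y i := by simpa using hi
    exact h1 (H i (by omega))

theorem delta_symm' {d : ℕ} {n : ℕ → ℕ} (x y : Vx d n) : delta x y = delta y x := by
  unfold delta
  simp only [ne_comm]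

theorem delta_tri' {d : ℕ} {n : ℕ → ℕ} (x y z : Vx d n) :
    delta x z ≤ max (delta x y) (delta y z) := by
  rw [delta_le_iff']
  intro i hi
  exact ((delta_le_iff' x y _).1 le_rfl i (le_trans (le_max_left _ _) hi)).trans
    ((delta_le_iff' y z _).1 le_rfl i (le_trans (le_max_right _ _) hi))

theorem delta_exists' {d : ℕ} {n : ℕ → ℕ} (hn : ∀ i < d, 2 ≤ n i) (x : Vx d n) (m : ℕ)
    (hm : m ≤ d) : ∃ y, delta x y = m := by
  rcases m with _ | m
  · exact ⟨x, Nat.le_zero.1 ((delta_le_iff' x x 0).2 fun _ _ => rfl)⟩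
  · have h2 := hn m hm
    haveI : Nontrivial (Fin (n ((⟨m, hm⟩ : Fin d) : ℕ))) := Fin.nontrivial_iff_two_le.2 h2
    obtain ⟨a, ha⟩ := exists_ne (x ⟨m, hm⟩)
    refine ⟨Function.update x ⟨m, hm⟩ a, le_antisymm ?_ ?_⟩
    · rw [delta_le_iff']
      intro i hi
      rw [Function.update_of_ne]
      intro h
      have := congrArg Fin.val h
      simp only at this
      omega
    · by_contra hlt
      have := (delta_le_iff' x (Function.update x ⟨m, hm⟩ a) m).1 (by omega) ⟨m, hm⟩ le_rfl
      rw [Function.update_self] at this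
      exact ha this.symm

theorem triple_ne' {d : ℕ} {n : ℕ → ℕ} (x₀ : Vx d n) (i h j : ℕ) :
    Es x₀ i * A d n h * Es x₀ j ≠ 0 ↔
      ∃ y z, delta x₀ y = i ∧ delta y z = h ∧ delta x₀ z = j := by
  have e : ∀ m, Es x₀ m = Matrix.diagonal fun y => if delta x₀ y = m then (1 : ℂ) else 0 := by
    intro m
    ext y z
    by_cases hyz : y = z
    · subst hyz; simp [Es]
    · simp [Es, hyz]
  have key : ∀ y z, (Es x₀ i * A d n h * Es x₀ j) y z =
      if delta x₀ y = i ∧ delta y z = h ∧ delta x₀ z = j then 1 else 0 := by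
    intro y z
    rw [e, e, Matrix.mul_diagonal, Matrix.diagonal_mul]
    simp only [A, Matrix.of_apply]
    split_ifs <;> simp_all
  constructor
  · intro H
    by_contra hc
    apply H
    ext y z
    rw [key, if_neg fun hh => hc ⟨y, z, hh⟩]
    rfl
  · rintro ⟨y, z, hyz⟩ H
    have := key y z
    rw [H, if_pos hyz] at this
    simp at this

/-- (a) if `i < j` then `E_i* A_h E_j* ≠ 0 ↔ h = j`;
(b) if `h > i` then `E_i* A_i E_h* = 0`;
(c) if `h < j` then `E_i* A_h E_j* ≠ 0 ↔ i = j`. -/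
theorem stmt12 (d : ℕ) (hd : 1 ≤ d) (n : ℕ → ℕ) (hn : ∀ i < d, 2 ≤ n i)
    (x₀ : Vx d n) (i j h : ℕ) (hi : i ≤ d) (hj : j ≤ d) (hh : h ≤ d) :
    (i < j → (Es x₀ i * A d n h * Es x₀ j ≠ 0 ↔ h = j)) ∧
    (h > i → Es x₀ i * A d n i * Es x₀ h = 0) ∧
    (h < j → (Es x₀ i * A d n h * Es x₀ j ≠ 0 ↔ i = j)) := by
  have iso : ∀ y z : Vx d n, delta x₀ z ≤ max (delta x₀ y) (delta y z) ∧
      delta x₀ y ≤ max (delta x₀ z) (delta y z) ∧ delta y z ≤ max (delta x₀ y) (delta x₀ z) := by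
    intro y z
    have h1 := delta_tri' x₀ y z
    have h2 := delta_tri' x₀ z y
    have h3 := delta_tri' y x₀ z
    rw [delta_symm' z y] at h2
    rw [delta_symm' y x₀] at h3
    exact ⟨h1, h2, h3⟩
  refine ⟨fun hij => ?_, fun hhi => ?_, fun hhj => ?_⟩
  · rw [triple_ne']
    constructor
    · rintro ⟨y, z, h1, h2, h3⟩
      have := iso y z
      omega
    · rintro rfl
      obtain ⟨y, hy⟩ := delta_exists' hn x₀ i hi
      obtain ⟨z, hz⟩ := delta_exists' hn x₀ h hj
      have := iso y z
      exact ⟨y, z, hy, by omega, hz⟩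
  · by_contra hne
    obtain ⟨y, z, h1, h2, h3⟩ := (triple_ne' x₀ i i h).1 hne
    have := iso y z
    omega
  · rw [triple_ne']
    constructor
    · rintro ⟨y, z, h1, h2, h3⟩
      have := iso y z
      omega
    · rintro rfl
      obtain ⟨y, hy⟩ := delta_exists' hn x₀ i hi
      obtain ⟨z, hz⟩ := delta_exists' hn y h hh
      have := iso y z
      exact ⟨y, z, hy, hz, by omega⟩
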